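/- (Proposition 3.2, measure-theoretic form.) Let X be a finite alphabet with k = |X| ≥ 2 elements. Let f, f₁ : ℕ → ℝ be positive functions with f₁(n) ≤ f(n) for all n, such that n ↦ f(n)/f₁(n) is subexponential. Let S ⊆ X* be a set with ρ_n(S) → 1 exponentially fast, i.e., there exist C > 0 and 0 ≤ σ < 1 with 1 − |S ∩ B_n|/|B_n| ≤ C σ^n for all n ≥ 1. Let T : X* → ℝ be non-negative and satisfy T(w) ≤ f(|w|) for every w ∈ X* and T(w) ≤ f₁(|w|) for every w ∈ S. Then the supremum, taken over all length-invariant discrete probability measures μ : X* → [0,1], of the sums ∑_{w ∈ X*} (T(w)/f₁(|w|)) μ(w) is finite. -/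

import Mathlib

/-!
A length-invariant measure is constant on each sphere of words of a fixed length, so the `μ`-average
of `T w / f₁ |w|` is a convex combination of its uniform averages over spheres, and it is enough to
bound the latter. Since `k ≥ 2`, the sphere of radius `n` carries at least half of the ball `B_n`.
Hence the words outside `S` have proportion at most `2 (1 - ρ_n(S))` in it; they contribute at most
`f n / f₁ n` each, and all others at most `1`, so the sphere average is at most
`1 + 2 (f n / f₁ n) (1 - ρ_n(S))`. Exponential decay of `1 - ρ_n(S)` beats the subexponential
`f / f₁`.
-/

open Filter Topology Asymptotics
open scoped Finset

section Subexponential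

/-- A sequence of subexponential growth; nonnegativity is not part of the definition. -/
def IsSubexponential (g : ℕ → ℝ) : Prop :=
  ∀ r : ℝ, 1 < r → Tendsto (fun n => g n / r ^ n) atTop (𝓝 0)

variable {g δ : ℕ → ℝ} {σ : ℝ}

theorem IsSubexponential.tendsto_mul_pow (hg : IsSubexponential g) (hσ : |σ| < 1) :
    Tendsto (fun n => g n * σ ^ n) atTop (𝓝 0) := by
  obtain ⟨τ, hστ, hτ⟩ := exists_between hσ
  have hτ0 : 0 < τ := (abs_nonneg σ).trans_lt hστ
  have hgτ : Tendsto (fun n => g n * τ ^ n) atTop (𝓝 0) := by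
    simpa only [inv_pow, div_inv_eq_mul] using hg τ⁻¹ ((one_lt_inv₀ hτ0).2 hτ)
  refine squeeze_zero_norm (fun n => ?_) (tendsto_zero_iff_norm_tendsto_zero.1 hgτ)
  rw [norm_mul, norm_mul, norm_pow, norm_pow, Real.norm_eq_abs σ, Real.norm_of_nonneg hτ0.le]
  gcongr

theorem IsSubexponential.tendsto_mul_of_isBigO_pow (hg : IsSubexponential g) (hσ : |σ| < 1)
    (hδ : δ =O[atTop] fun n => σ ^ n) : Tendsto (fun n => g n * δ n) atTop (𝓝 0) :=
  ((isBigO_refl g atTop).mul hδ).trans_tendsto (hg.tendsto_mul_pow hσ)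

end Subexponential

section Averages

variable {α ι : Type*}

theorem sum_le_card_add_card_filter_notMem_mul (s : Finset α) (S : Set α)
    [DecidablePred (· ∈ S)] {g : α → ℝ} {r : ℝ} (hgS : ∀ a ∈ s, a ∈ S → g a ≤ 1)
    (hgr : ∀ a ∈ s, g a ≤ r) : ∑ a ∈ s, g a ≤ #s + #{a ∈ s | a ∉ S} * r := by
  rw [← Finset.sum_filter_add_sum_filter_not s (· ∈ S)]
  gcongr
  · calc ∑ a ∈ s with a ∈ S, g a ≤ #{a ∈ s | a ∈ S} • (1 : ℝ) :=
          Finset.sum_le_card_nsmul _ _ _ fun a ha =>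
            hgS a (Finset.mem_filter.1 ha).1 (Finset.mem_filter.1 ha).2
      _ ≤ #s := by
          rw [nsmul_one]
          exact_mod_cast Finset.card_filter_le s _
  · rw [← nsmul_eq_mul]
    exact Finset.sum_le_card_nsmul _ _ _ fun a ha => hgr a (Finset.mem_filter.1 ha).1

theorem sum_mul_le_mul_sum_of_const {s : Finset α} {g μ : α → ℝ} {D : ℝ}
    (hμ0 : ∀ a ∈ s, 0 ≤ μ a) (hμ : ∀ a ∈ s, ∀ b ∈ s, μ a = μ b) (hg : ∑ a ∈ s, g a ≤ D * #s) :
    ∑ a ∈ s, g a * μ a ≤ D * ∑ a ∈ s, μ a := by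
  obtain rfl | ⟨b, hb⟩ := s.eq_empty_or_nonempty
  · simp
  calc ∑ a ∈ s, g a * μ a = (∑ a ∈ s, g a) * μ b := by
        rw [Finset.sum_mul]
        exact Finset.sum_congr rfl fun a ha => by rw [hμ a ha b hb]
    _ ≤ D * #s * μ b := mul_le_mul_of_nonneg_right hg (hμ0 b hb)
    _ = D * ∑ a ∈ s, μ a := by
        rw [Finset.sum_congr rfl fun a ha => hμ a ha b hb, Finset.sum_const, nsmul_eq_mul,
          mul_assoc]

theorem summable_and_tsum_le_of_sum_fiber_le {ℓ : α → ι} {s : ι → Finset α}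
    (hs : ∀ i, (s i : Set α) = ℓ ⁻¹' {i}) {h μ : α → ℝ} {D M : ℝ} (h0 : ∀ a, 0 ≤ h a)
    (hμ : HasSum μ M) (hle : ∀ i, ∑ a ∈ s i, h a ≤ D * ∑ a ∈ s i, μ a) :
    Summable h ∧ ∑' a, h a ≤ D * M := by
  have tsum_fiber (u : α → ℝ) (i : ι) : ∑' a : ℓ ⁻¹' {i}, u a = ∑ a ∈ s i, u a := by
    rw [← hs, Finset.tsum_subtype']
  have hμs : HasSum (fun i => D * ∑ a ∈ s i, μ a) (D * M) := by
    simpa only [tsum_fiber] using (hμ.tsum_fiberwise ℓ).mul_left D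
  have hh : Summable h := by
    refine (summable_partition h0 (s := fun i => ℓ ⁻¹' {i}) fun a => ⟨ℓ a, rfl, fun _ => Eq.symm⟩).2
      ⟨fun i => ?_, ?_⟩
    · rw [← hs]
      exact (s i).summable h
    · simp only [tsum_fiber]
      exact hμs.summable.of_nonneg_of_le (fun i => Finset.sum_nonneg fun a _ => h0 a) hle
  have hhs : HasSum (fun i => ∑ a ∈ s i, h a) (∑' a, h a) := by
    simpa only [tsum_fiber] using hh.hasSum.tsum_fiberwise ℓ
  exact ⟨hh, hasSum_le hle hhs hμs⟩

end Averages

section Words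

/-- The sphere of radius `n` in `X*`: the words of length exactly `n`. It is a `Finset` so that one
can sum over it. -/
noncomputable def wordSphere (X : Type*) [Finite X] (n : ℕ) : Finset (List X) :=
  (List.finite_length_eq X n).toFinset

/-- The ball `B_n` in `X*`: the words of length at most `n`. -/
def wordBall (X : Type*) (n : ℕ) : Set (List X) :=
  {w | w.length ≤ n}

/-- The proportion `ρ_n(S) = |S ∩ B_n| / |B_n|` of words of `S` in the ball `B_n`. -/
noncomputable def ballDensity {X : Type*} (S : Set (List X)) (n : ℕ) : ℝ :=
  (S ∩ wordBall X n).ncard / (wordBall X n).ncard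

variable {X : Type*} [Finite X] {S : Set (List X)}

@[simp]
theorem mem_wordSphere {n : ℕ} {w : List X} : w ∈ wordSphere X n ↔ w.length = n :=
  Set.Finite.mem_toFinset _

theorem coe_wordSphere (n : ℕ) : (wordSphere X n : Set (List X)) = List.length ⁻¹' {n} :=
  Set.Finite.coe_toFinset _

theorem card_wordSphere (n : ℕ) : #(wordSphere X n) = Nat.card X ^ n := by
  have := Fintype.ofFinite X
  have hcard : Nat.card (List.Vector X n) = Nat.card X ^ n := by
    rw [Nat.card_eq_fintype_card, card_vector, Nat.card_eq_fintype_card]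
  rw [wordSphere, ← Set.ncard_eq_toFinset_card _ (List.finite_length_eq X n)]
  exact hcard

theorem finite_wordBall (n : ℕ) : (wordBall X n).Finite :=
  List.finite_length_le X n

theorem ncard_wordBall_pos (n : ℕ) : 0 < (wordBall X n).ncard :=
  (Set.ncard_pos (finite_wordBall n)).2 ⟨[], n.zero_le⟩

theorem wordBall_zero : wordBall X 0 = wordSphere X 0 := by
  ext w
  simp [wordBall]

theorem wordBall_succ (n : ℕ) :
    wordBall X (n + 1) = wordBall X n ∪ wordSphere X (n + 1) := by
  ext w
  simp [wordBall, Nat.le_succ_iff]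

theorem ncard_wordBall_le_two_mul_card_wordSphere (hk : 2 ≤ Nat.card X) (n : ℕ) :
    (wordBall X n).ncard ≤ 2 * #(wordSphere X n) := by
  induction n with
  | zero =>
    rw [wordBall_zero, Set.ncard_coe_finset]
    omega
  | succ n ih =>
    calc (wordBall X (n + 1)).ncard ≤ (wordBall X n).ncard + #(wordSphere X (n + 1)) := by
          rw [wordBall_succ, ← Set.ncard_coe_finset]
          exact Set.ncard_union_le _ _
      _ ≤ Nat.card X ^ n * 2 + #(wordSphere X (n + 1)) := by
          rw [← card_wordSphere, mul_comm]
          gcongr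
      _ ≤ Nat.card X ^ n * Nat.card X + #(wordSphere X (n + 1)) := by gcongr
      _ = 2 * #(wordSphere X (n + 1)) := by rw [← pow_succ, ← card_wordSphere, two_mul]

theorem one_sub_ballDensity (S : Set (List X)) (n : ℕ) :
    1 - ballDensity S n = (wordBall X n \ S).ncard / (wordBall X n).ncard := by
  have hB : ((wordBall X n).ncard : ℝ) ≠ 0 := by exact_mod_cast (ncard_wordBall_pos n).ne'
  have hsplit : ((S ∩ wordBall X n).ncard : ℝ) + (wordBall X n \ S).ncard =
      (wordBall X n).ncard := by
    rw [Set.inter_comm]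
    exact_mod_cast Set.ncard_inter_add_ncard_sdiff_eq_ncard _ S (finite_wordBall n)
  rw [ballDensity, one_sub_div hB, ← hsplit, add_sub_cancel_left]

theorem ballDensity_le_one (S : Set (List X)) (n : ℕ) : ballDensity S n ≤ 1 := by
  rw [← sub_nonneg, one_sub_ballDensity]
  positivity

theorem isBigO_one_sub_ballDensity {C σ : ℝ} (hσ : 0 ≤ σ)
    (hS : ∀ᶠ n in atTop, 1 - ballDensity S n ≤ C * σ ^ n) :
    (fun n => 1 - ballDensity S n) =O[atTop] fun n => σ ^ n :=
  .of_bound C <| hS.mono fun n hn => by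
    rwa [Real.norm_of_nonneg (sub_nonneg.2 (ballDensity_le_one S n)),
      Real.norm_of_nonneg (pow_nonneg hσ n)]

theorem card_filter_notMem_wordSphere_le [DecidablePred (· ∈ S)] (hk : 2 ≤ Nat.card X) (n : ℕ) :
    (#{w ∈ wordSphere X n | w ∉ S} : ℝ) ≤ 2 * (1 - ballDensity S n) * #(wordSphere X n) := by
  have hsub : (({w ∈ wordSphere X n | w ∉ S} : Finset (List X)) : Set (List X)) ⊆
      wordBall X n \ S := fun w hw => by
    obtain ⟨hwn, hwS⟩ := Finset.mem_filter.1 (Finset.mem_coe.1 hw)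
    exact ⟨(mem_wordSphere.1 hwn).le, hwS⟩
  have hρ : 0 ≤ 1 - ballDensity S n := sub_nonneg.2 (ballDensity_le_one S n)
  have hB : ((wordBall X n).ncard : ℝ) ≠ 0 := by exact_mod_cast (ncard_wordBall_pos n).ne'
  calc (#{w ∈ wordSphere X n | w ∉ S} : ℝ) ≤ (wordBall X n \ S).ncard := by
        rw [← Set.ncard_coe_finset]
        exact_mod_cast Set.ncard_le_ncard hsub (finite_wordBall n).sdiff
    _ = (1 - ballDensity S n) * (wordBall X n).ncard := by
        rw [one_sub_ballDensity, div_mul_cancel₀ _ hB]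
    _ ≤ (1 - ballDensity S n) * (2 * #(wordSphere X n)) := by
        gcongr
        exact_mod_cast ncard_wordBall_le_two_mul_card_wordSphere hk n
    _ = 2 * (1 - ballDensity S n) * #(wordSphere X n) := by ring

theorem sum_wordSphere_le (hk : 2 ≤ Nat.card X) {g : List X → ℝ} {r : ℝ} {n : ℕ} (hr : 0 ≤ r)
    (hgS : ∀ w ∈ S, g w ≤ 1) (hgr : ∀ w ∈ wordSphere X n, g w ≤ r) :
    ∑ w ∈ wordSphere X n, g w ≤ (1 + 2 * (r * (1 - ballDensity S n))) * #(wordSphere X n) := by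
  classical
  calc ∑ w ∈ wordSphere X n, g w
      ≤ #(wordSphere X n) + #{w ∈ wordSphere X n | w ∉ S} * r :=
        sum_le_card_add_card_filter_notMem_mul _ S (fun w _ => hgS w) hgr
    _ ≤ #(wordSphere X n) + 2 * (1 - ballDensity S n) * #(wordSphere X n) * r := by
        gcongr
        exact card_filter_notMem_wordSphere_le hk n
    _ = (1 + 2 * (r * (1 - ballDensity S n))) * #(wordSphere X n) := by ring

theorem summable_and_tsum_mul_le_of_sum_wordSphere_le {g μ : List X → ℝ} {D M : ℝ}
    (hg0 : ∀ w, 0 ≤ g w) (hg : ∀ n, ∑ w ∈ wordSphere X n, g w ≤ D * #(wordSphere X n))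
    (hμ0 : ∀ w, 0 ≤ μ w) (hμ : HasSum μ M)
    (hinv : ∀ w w' : List X, w.length = w'.length → μ w = μ w') :
    Summable (fun w => g w * μ w) ∧ ∑' w, g w * μ w ≤ D * M := by
  refine summable_and_tsum_le_of_sum_fiber_le coe_wordSphere
    (fun w => mul_nonneg (hg0 w) (hμ0 w)) hμ fun n => ?_
  refine sum_mul_le_mul_sum_of_const (fun w _ => hμ0 w) (fun w hw w' hw' => hinv w w' ?_) (hg n)
  rw [mem_wordSphere.1 hw, mem_wordSphere.1 hw']

end Words

theorem average_case_sup_finite_general {X : Type*} [Finite X] (hk : 2 ≤ Nat.card X)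
    {f f₁ : ℕ → ℝ} (hf₁ : ∀ n, 0 < f₁ n) {S : Set (List X)}
    (hS : BddAbove (Set.range fun n => f n / f₁ n * (1 - ballDensity S n)))
    {T : List X → ℝ} (hT0 : ∀ w, 0 ≤ T w) (hTf : ∀ w, T w ≤ f w.length)
    (hTS : ∀ w ∈ S, T w ≤ f₁ w.length) :
    ∃ C' : ℝ, ∀ μ : List X → ℝ, (∀ w, 0 ≤ μ w) → HasSum μ 1 →
      (∀ w w' : List X, w.length = w'.length → μ w = μ w') →
      Summable (fun w => T w / f₁ w.length * μ w) ∧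
      ∑' w, T w / f₁ w.length * μ w ≤ C' := by
  obtain ⟨K, hK⟩ := hS
  obtain ⟨x⟩ : Nonempty X := (Nat.card_pos_iff.1 (by omega)).1
  have hf (n : ℕ) : 0 ≤ f n := by
    simpa only [List.length_replicate] using (hT0 _).trans (hTf (List.replicate n x))
  have hsphere (n : ℕ) : ∑ w ∈ wordSphere X n, T w / f₁ w.length ≤
      (1 + 2 * K) * #(wordSphere X n) := by
    have hTn : ∀ w ∈ wordSphere X n, T w / f₁ w.length ≤ f n / f₁ n := fun w hw => by
      obtain rfl := mem_wordSphere.1 hw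
      exact div_le_div_of_nonneg_right (hTf w) (hf₁ _).le
    refine (sum_wordSphere_le hk (div_nonneg (hf n) (hf₁ n).le)
      (fun w hw => div_le_one_of_le₀ (hTS w hw) (hf₁ _).le) hTn).trans ?_
    gcongr
    exact hK (Set.mem_range_self n)
  refine ⟨1 + 2 * K, fun μ hμ0 hμ hinv => ?_⟩
  simpa only [mul_one] using summable_and_tsum_mul_le_of_sum_wordSphere_le
    (fun w => div_nonneg (hT0 w) (hf₁ _).le) hsphere hμ0 hμ hinv

/-- Proposition 3.2 (measure-theoretic form).  Let `X` be a finite alphabet with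
`k = |X| ≥ 2` elements, let `f, f₁ : ℕ → ℝ` be positive with `f₁ ≤ f` and
`f / f₁` subexponential, and let `S ⊆ X*` be a set with `ρ_n(S) → 1`
exponentially fast, i.e. `1 - |S ∩ B_n| / |B_n| ≤ C σ ^ n` for some `C > 0`,
`0 ≤ σ < 1` and all `n ≥ 1`.  Let `T : X* → ℝ` be non-negative with
`T w ≤ f |w|` everywhere and `T w ≤ f₁ |w|` on `S`.  Then the supremum over all
length-invariant discrete probability measures `μ` of `∑_{w} (T w / f₁ |w|) μ w`
is finite: there is a single bound `C'` valid for every such `μ` (each sum being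
finite). -/
theorem average_case_sup_finite (X : Type) [Fintype X]
    (hk : 2 ≤ Fintype.card X)
    (f f₁ : ℕ → ℝ) (hf : ∀ n, 0 < f n) (hf₁ : ∀ n, 0 < f₁ n)
    (hle : ∀ n, f₁ n ≤ f n)
    (hsub : ∀ r : ℝ, 1 < r →
      Filter.Tendsto (fun n : ℕ => (f n / f₁ n) / r ^ n) Filter.atTop (nhds 0))
    (S : Set (List X)) (C σ : ℝ) (hC : 0 < C) (hσ0 : 0 ≤ σ) (hσ1 : σ < 1)
    (hS : ∀ n : ℕ, 1 ≤ n →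
      1 - ((S ∩ {w : List X | w.length ≤ n}).ncard : ℝ) /
            (({w : List X | w.length ≤ n} : Set (List X)).ncard : ℝ) ≤ C * σ ^ n)
    (T : List X → ℝ) (hT0 : ∀ w, 0 ≤ T w) (hTf : ∀ w, T w ≤ f w.length)
    (hTS : ∀ w ∈ S, T w ≤ f₁ w.length) :
    ∃ C' : ℝ,
      ∀ μ : List X → ℝ, (∀ w, 0 ≤ μ w) → (∀ w, μ w ≤ 1) → HasSum μ 1 →
        (∀ w w' : List X, w.length = w'.length → μ w = μ w') →
        Summable (fun w : List X => T w / f₁ w.length * μ w) ∧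
        (∑' w : List X, T w / f₁ w.length * μ w) ≤ C' := by
  have hρ := isBigO_one_sub_ballDensity hσ0 ((eventually_ge_atTop 1).mono hS)
  have hlim := IsSubexponential.tendsto_mul_of_isBigO_pow hsub (by rwa [abs_of_nonneg hσ0]) hρ
  obtain ⟨C', hC'⟩ := average_case_sup_finite_general (by rwa [Nat.card_eq_fintype_card]) hf₁
    hlim.bddAbove_range hT0 hTf hTS
  exact ⟨C', fun μ hμ0 _ => hC' μ hμ0⟩
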